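/- Let β_L, β_R > 0. For every E ∈ ℝ with E ≠ 0: ∫_ℝ e^{−i E s}·(1/(4π²))·(C_{β_L}(s) + C_{β_R}(s)) ds = (1/(4π))·(|E|/(e^{β_L|E|} − 1) + |E|/(e^{β_R|E|} − 1)). Consequently the transition rate of an Unruh–DeWitt detector at rest in the NESS, which equals this Fourier transform plus the vacuum rate −(E/(2π))·Θ(−E), is the arithmetic mean (1/2)·(𝓡₀^{(β_L)}(E) + 𝓡₀^{(β_R)}(E)) of the two Planckian rates 𝓡₀^{(β)}(E) := (1/(2π))·E/(e^{βE} − 1). -/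

import Mathlib

open MeasureTheory Real

/-- The function `C_β(s) = 1/(2s²) − (π²/(2β²))/sinh²(π s/β)` for `s ≠ 0`, extended
continuously by `C_β(0) := π²/(6β²)`. -/
noncomputable def Cfun (β s : ℝ) : ℝ :=
  if s = 0 then π ^ 2 / (6 * β ^ 2)
  else 1 / (2 * s ^ 2) - (π ^ 2 / (2 * β ^ 2)) / Real.sinh (π * s / β) ^ 2

/-- The Planckian transition rate `𝓡₀^{(β)}(E) = (1/(2π))·E/(e^{βE} − 1)`. -/
noncomputable def planckRate (β E : ℝ) : ℝ := (1 / (2 * π)) * (E / (Real.exp (β * E) - 1))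

open Filter Topology FourierTransform

lemma aux_int_exp_abs {c : ℝ} (hc : 0 < c) : Integrable (fun x : ℝ => Real.exp (-(c * |x|))) := by
  rw [← integrableOn_univ, ← Set.Iic_union_Ioi (a := (0:ℝ)), integrableOn_union]
  constructor
  · refine (integrableOn_exp_mul_Iic hc 0).congr_fun ?_ measurableSet_Iic
    intro x hx
    simp only [Set.mem_Iic] at hx
    simp [abs_of_nonpos hx]
  · refine (integrableOn_exp_mul_Ioi (a := -c) (by linarith) 0).congr_fun ?_ measurableSet_Ioi
    intro x hx
    simp only [Set.mem_Ioi] at hx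
    simp [abs_of_pos hx]

lemma aux_abs_exp_le {c : ℝ} (hc : 0 < c) (x : ℝ) :
    |x| * Real.exp (-(c * |x|)) ≤ (2 / c) * Real.exp (-(c / 2 * |x|)) := by
  have h1 : c / 2 * |x| ≤ Real.exp (c / 2 * |x|) := by
    linarith [Real.add_one_le_exp (c / 2 * |x|)]
  have h2 : Real.exp (-(c * |x|)) = Real.exp (-(c / 2 * |x|)) * Real.exp (-(c / 2 * |x|)) := by
    rw [← Real.exp_add]; congr 1; ring
  have h3 : Real.exp (c / 2 * |x|) * Real.exp (-(c / 2 * |x|)) = 1 := by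
    rw [← Real.exp_add]; simp
  have h4 : c / 2 * |x| * Real.exp (-(c / 2 * |x|)) ≤ 1 := by
    rw [← h3]; gcongr
  rw [h2]
  calc |x| * (Real.exp (-(c / 2 * |x|)) * Real.exp (-(c / 2 * |x|)))
      = (2 / c) * (c / 2 * |x| * Real.exp (-(c / 2 * |x|))) * Real.exp (-(c / 2 * |x|)) := by
        field_simp
    _ ≤ (2 / c) * 1 * Real.exp (-(c / 2 * |x|)) := by gcongr
    _ = _ := by ring

lemma aux_int_abs_exp {c : ℝ} (hc : 0 < c) :
    Integrable (fun x : ℝ => |x| * Real.exp (-(c * |x|))) := by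
  refine ((aux_int_exp_abs (c := c / 2) (by positivity)).const_mul (2 / c)).mono'
    (by fun_prop) (ae_of_all _ fun x => ?_)
  rw [Real.norm_of_nonneg (by positivity)]
  exact aux_abs_exp_le hc x

lemma aux_tendsto_exp {c : ℂ} (hc : 0 < c.re) :
    Tendsto (fun x : ℝ => (-((x : ℂ) / c + 1 / c ^ 2)) * Complex.exp (-(c * x))) atTop (𝓝 0) := by
  have hr : Tendsto (fun x : ℝ => (|x| * ‖c‖⁻¹ + ‖1 / c ^ 2‖) * Real.exp (-(c.re * x))) atTop (𝓝 0) := by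
    have h1 : Tendsto (fun x : ℝ => x * Real.exp (-(c.re * x))) atTop (𝓝 0) := by
      simpa using tendsto_rpow_mul_exp_neg_mul_atTop_nhds_zero 1 c.re hc
    have h2 : Tendsto (fun x : ℝ => Real.exp (-(c.re * x))) atTop (𝓝 0) := by
      simpa using tendsto_rpow_mul_exp_neg_mul_atTop_nhds_zero 0 c.re hc
    have h3 := (h1.const_mul (‖c‖⁻¹)).add (h2.const_mul (‖1 / c ^ 2‖))
    simp only [mul_zero, add_zero] at h3
    refine h3.congr' ?_
    filter_upwards [eventually_ge_atTop 0] with x hx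
    rw [abs_of_nonneg hx]; ring
  refine squeeze_zero_norm (fun x => ?_) hr
  rw [norm_mul, Complex.norm_exp, norm_neg]
  have : (-(c * (x : ℂ))).re = -(c.re * x) := by simp
  rw [this]
  gcongr
  refine (norm_add_le _ _).trans ?_
  rw [norm_div, Complex.norm_real, div_eq_mul_inv, Real.norm_eq_abs]

lemma aux_integrable_half {c : ℂ} (hc : 0 < c.re) :
    IntegrableOn (fun x : ℝ => (x : ℂ) * Complex.exp (-(c * x))) (Set.Ioi 0) := by
  refine ((aux_int_abs_exp hc).integrableOn (s := Set.Ioi 0)).mono' (by fun_prop) ?_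
  filter_upwards [ae_restrict_mem measurableSet_Ioi] with x hx
  rw [Set.mem_Ioi] at hx
  rw [norm_mul, Complex.norm_exp, Complex.norm_real, Real.norm_eq_abs]
  have : (-(c * (x : ℂ))).re = -(c.re * |x|) := by simp [abs_of_pos hx]
  rw [this]

lemma aux_integral_half {c : ℂ} (hc : 0 < c.re) :
    ∫ x in Set.Ioi (0:ℝ), (x : ℂ) * Complex.exp (-(c * x)) = 1 / c ^ 2 := by
  have hc0 : c ≠ 0 := by rintro rfl; simp at hc
  have := integral_Ioi_of_hasDerivAt_of_tendsto' (a := (0:ℝ))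
    (f := fun x : ℝ => (-((x : ℂ) / c + 1 / c ^ 2)) * Complex.exp (-(c * x)))
    (f' := fun x : ℝ => (x : ℂ) * Complex.exp (-(c * x))) ?_ (aux_integrable_half hc) (aux_tendsto_exp hc)
  · rw [this]; simp
  · intro x _
    have h0 : HasDerivAt (fun x : ℝ => (x : ℂ)) 1 x := Complex.ofRealCLM.hasDerivAt
    have h1 := ((h0.div_const c).add_const (1 / c ^ 2)).neg
    have h2 := ((h0.const_mul c).neg).cexp
    refine HasDerivAt.congr_deriv (h1.mul h2) ?_
    change -(1 / c) * Complex.exp (-(c * x))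
      + (-((x : ℂ) / c + 1 / c ^ 2)) * (Complex.exp (-(c * x)) * -(c * 1)) = _
    field_simp
    ring

lemma aux_integral_full {a : ℝ} (ha : 0 < a) (θ : ℝ) :
    ∫ v : ℝ, Complex.exp (-(Complex.I * θ * v)) * ((|v| * Real.exp (-(a * |v|)) : ℝ) : ℂ)
      = 1 / ((a : ℂ) + Complex.I * θ) ^ 2 + 1 / ((a : ℂ) - Complex.I * θ) ^ 2 := by
  set g : ℝ → ℂ := fun v => Complex.exp (-(Complex.I * θ * v)) * ((|v| * Real.exp (-(a * |v|)) : ℝ) : ℂ) with hg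
  have hint : Integrable g := by
    refine (aux_int_abs_exp ha).mono' (by fun_prop) (ae_of_all _ fun x => ?_)
    rw [hg]
    simp only
    rw [norm_mul, Complex.norm_exp, Complex.norm_real, Real.norm_of_nonneg (by positivity)]
    simp
  rw [← intervalIntegral.integral_Iic_add_Ioi (b := 0) hint.integrableOn hint.integrableOn]
  have hneg := integral_comp_neg_Ioi 0 g
  rw [neg_zero] at hneg
  rw [← hneg, add_comm]
  congr 1
  · rw [← aux_integral_half (c := (a : ℂ) + Complex.I * θ) (by simpa using ha)]
    refine setIntegral_congr_fun measurableSet_Ioi fun x hx => ?_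
    rw [Set.mem_Ioi] at hx
    simp only [hg, abs_of_pos hx]
    push_cast
    rw [mul_left_comm, ← Complex.exp_add]
    congr 2; ring
  · rw [← aux_integral_half (c := (a : ℂ) - Complex.I * θ) (by simpa using ha)]
    refine setIntegral_congr_fun measurableSet_Ioi fun x hx => ?_
    rw [Set.mem_Ioi] at hx
    simp only [hg, abs_neg, abs_of_pos hx]
    push_cast
    rw [mul_left_comm, ← Complex.exp_add]
    congr 2; ring

lemma aux_q {t : ℝ} (ht : 0 < t) :
    Real.exp (-(2 * π * t)) / (1 - Real.exp (-(2 * π * t))) ^ 2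
        = 1 / (4 * Real.sinh (π * t) ^ 2) := by
  have e1 : Real.exp (-(2 * π * t)) = Real.exp (-(π * t)) ^ 2 := by
    rw [← Real.exp_nat_mul]; congr 1; push_cast; ring
  have e2 : Real.exp (π * t) * Real.exp (-(π * t)) = 1 := by rw [← Real.exp_add]; simp
  have e3 : 1 - Real.exp (-(2 * π * t)) = 2 * Real.sinh (π * t) * Real.exp (-(π * t)) := by
    rw [Real.sinh_eq, e1, ← e2]; ring
  have e4 : Real.sinh (π * t) ≠ 0 := by
    have := Real.sinh_pos_iff.2 (mul_pos Real.pi_pos ht); exact this.ne'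
  rw [e3, e1]
  have := (Real.exp_pos (-(π * t))).ne'
  field_simp
  norm_num

lemma aux_summable (t : ℝ) : Summable (fun n : ℤ => 1 / ((Complex.I * t : ℂ) + n) ^ 2) := by
  have := EisensteinSeries.linear_right_summable (Complex.I * t) 1 (k := 2) le_rfl
  refine this.congr fun n => ?_
  simp only [Int.cast_one, one_mul, one_div]
  norm_cast

lemma aux_tsum {t : ℝ} (ht : 0 < t) : ∑' n : ℤ, 1 / ((Complex.I * t : ℂ) + n) ^ 2 =
    ((-(π ^ 2 / Real.sinh (π * t) ^ 2) : ℝ) : ℂ) := by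
  have hz : 0 < (Complex.I * t : ℂ).im := by simpa using ht
  have hq := EisensteinSeries.qExpansion_identity (k := 1) le_rfl ⟨Complex.I * t, hz⟩
  simp only [Nat.factorial_one, Nat.cast_one, div_one, pow_one] at hq
  have hexp : Complex.exp (2 * π * Complex.I * (Complex.I * t))
      = ((Real.exp (-(2 * π * t)) : ℝ) : ℂ) := by
    push_cast
    congr 1
    linear_combination (2 * π * t : ℂ) * Complex.I_mul_I
  have hlt : Real.exp (-(2 * π * t)) < 1 := by
    rw [Real.exp_lt_one_iff]; have := Real.pi_pos; nlinarith [mul_pos this ht]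
  rw [hexp, tsum_coe_mul_geometric_of_norm_lt_one
    (by rw [Complex.norm_real, Real.norm_of_nonneg (Real.exp_pos _).le]; exact hlt)] at hq
  have h8 : (((Real.exp (-(2 * π * t)) : ℝ) : ℂ) / (1 - ((Real.exp (-(2 * π * t)) : ℝ) : ℂ)) ^ 2)
    = ((1 / (4 * Real.sinh (π * t) ^ 2) : ℝ) : ℂ) := by
    rw [← aux_q ht]; push_cast; rfl
  rw [h8] at hq
  refine hq.trans ?_
  have h10 : (-2 * (π : ℂ) * Complex.I) ^ (1 + 1) = -(4 * π ^ 2) := by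
    rw [mul_pow, Complex.I_sq]; ring
  rw [h10]
  push_cast
  ring

lemma aux_series_pos {t : ℝ} (ht : 0 < t) :
    HasSum (fun n : ℕ => 1 / (((n : ℂ) + 1) + Complex.I * t) ^ 2
      + 1 / (((n : ℂ) + 1) - Complex.I * t) ^ 2)
      ((1 / t ^ 2 - π ^ 2 / Real.sinh (π * t) ^ 2 : ℝ) : ℂ) := by
  set f : ℤ → ℂ := fun n : ℤ => 1 / ((Complex.I * t : ℂ) + n) ^ 2 with hf
  have hsum : Summable f := aux_summable t
  have h1 : Summable (fun n : ℕ => f ((n : ℤ) + 1)) :=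
    hsum.comp_injective (i := fun n : ℕ => (n : ℤ) + 1) (fun a b h => by simpa using h)
  have h2 : Summable (fun n : ℕ => f (-((n : ℤ) + 1))) :=
    hsum.comp_injective (i := fun n : ℕ => -((n : ℤ) + 1))
      (fun a b h => by
        have h' : -((a : ℤ) + 1) = -((b : ℤ) + 1) := h
        omega)
  have h3 := tsum_of_add_one_of_neg_add_one h1 h2
  have h4 := h1.hasSum.add h2.hasSum
  have h9 : f 0 = -(1 / (t:ℂ)^2) := by
    simp only [hf]
    rw [Int.cast_zero, add_zero, mul_pow, Complex.I_sq]; ring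
  rw [aux_tsum ht, h9] at h3
  have h5 : (∑' n : ℕ, f ((n : ℤ) + 1)) + ∑' n : ℕ, f (-((n : ℤ) + 1))
      = ((1 / t ^ 2 - π ^ 2 / Real.sinh (π * t) ^ 2 : ℝ) : ℂ) := by
    push_cast at h3 ⊢
    linear_combination -h3
  rw [h5] at h4
  have h12 : (fun n : ℕ => 1 / (((n : ℂ) + 1) + Complex.I * t) ^ 2
      + 1 / (((n : ℂ) + 1) - Complex.I * t) ^ 2)
      = fun n : ℕ => f ((n : ℤ) + 1) + f (-((n : ℤ) + 1)) := by
    funext n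
    simp only [hf]
    push_cast
    congr 2
    · ring
    · ring
  rw [h12]
  exact h4

lemma aux_Cfun_neg (β s : ℝ) : Cfun β (-s) = Cfun β s := by
  unfold Cfun
  have : π * -s / β = -(π * s / β) := by ring
  rw [this, Real.sinh_neg]
  simp only [neg_eq_zero, neg_sq]

lemma aux_series_scaled_pos {β s : ℝ} (hβ : 0 < β) (hs : 0 < s) :
    HasSum (fun n : ℕ => 1 / (((β * ((n : ℝ) + 1) : ℝ) : ℂ) + Complex.I * s) ^ 2
      + 1 / (((β * ((n : ℝ) + 1) : ℝ) : ℂ) - Complex.I * s) ^ 2)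
      ((2 * Cfun β s : ℝ) : ℂ) := by
  have h := (aux_series_pos (t := s / β) (by positivity)).mul_left (1 / (β : ℂ) ^ 2)
  have hβ' : (β : ℂ) ≠ 0 := by exact_mod_cast hβ.ne'
  have e1 : (fun n : ℕ => 1 / (((β * ((n : ℝ) + 1) : ℝ) : ℂ) + Complex.I * s) ^ 2
      + 1 / (((β * ((n : ℝ) + 1) : ℝ) : ℂ) - Complex.I * s) ^ 2)
      = fun n : ℕ => (1 / (β : ℂ) ^ 2) * (1 / (((n : ℂ) + 1) + Complex.I * ((s / β : ℝ) : ℂ)) ^ 2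
      + 1 / (((n : ℂ) + 1) - Complex.I * ((s / β : ℝ) : ℂ)) ^ 2) := by
    funext n
    have a1 : ((β * ((n : ℝ) + 1) : ℝ) : ℂ) + Complex.I * s
        = β * (((n : ℂ) + 1) + Complex.I * ((s / β : ℝ) : ℂ)) := by
      push_cast; field_simp
    have a2 : ((β * ((n : ℝ) + 1) : ℝ) : ℂ) - Complex.I * s
        = β * (((n : ℂ) + 1) - Complex.I * ((s / β : ℝ) : ℂ)) := by
      push_cast; field_simp
    rw [a1, a2, mul_pow, mul_pow, one_div_mul_eq_div, add_div, div_div, div_div, mul_comm, mul_comm ((β : ℂ) ^ 2)]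
  have e2 : ((2 * Cfun β s : ℝ) : ℂ) = (1 / (β : ℂ) ^ 2) *
      ((1 / (s / β) ^ 2 - π ^ 2 / Real.sinh (π * (s / β)) ^ 2 : ℝ) : ℂ) := by
    have : 2 * Cfun β s = (1 / β ^ 2) *
      (1 / (s / β) ^ 2 - π ^ 2 / Real.sinh (π * (s / β)) ^ 2) := by
      unfold Cfun
      rw [if_neg hs.ne', ← mul_div_assoc π s β]
      field_simp
    rw [this]; push_cast; rfl
  rw [e1, e2]
  exact h

lemma aux_series_scaled {β s : ℝ} (hβ : 0 < β) (hs : s ≠ 0) :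
    HasSum (fun n : ℕ => 1 / (((β * ((n : ℝ) + 1) : ℝ) : ℂ) + Complex.I * s) ^ 2
      + 1 / (((β * ((n : ℝ) + 1) : ℝ) : ℂ) - Complex.I * s) ^ 2)
      ((2 * Cfun β s : ℝ) : ℂ) := by
  rcases lt_or_gt_of_ne hs with h | h
  · have := aux_series_scaled_pos hβ (neg_pos.2 h)
    rw [aux_Cfun_neg] at this
    convert! this using 2 with n
    rw [add_comm]
    push_cast
    congr 2
    · ring
    · ring
  · exact aux_series_scaled_pos hβ h

lemma aux_planck_sum {β : ℝ} (hβ : 0 < β) (v : ℝ) :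
    HasSum (fun n : ℕ => |v| * Real.exp (-(β * ((n : ℝ) + 1) * |v|)))
      (|v| / (Real.exp (β * |v|) - 1)) := by
  by_cases hv : v = 0
  · subst hv; simp
  have hv' : 0 < |v| := abs_pos.2 hv
  have hlt : Real.exp (-(β * |v|)) < 1 := by
    rw [Real.exp_lt_one_iff]; nlinarith [mul_pos hβ hv']
  have h := (hasSum_geometric_of_lt_one (Real.exp_pos _).le hlt).mul_left
    (|v| * Real.exp (-(β * |v|)))
  convert! h using 1
  · funext n
    rw [mul_assoc |v|, ← Real.exp_nat_mul, ← Real.exp_add]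
    congr 2; ring
  · have e : Real.exp (β * |v|) * Real.exp (-(β * |v|)) = 1 := by rw [← Real.exp_add]; simp
    have h1 : 1 - Real.exp (-(β * |v|)) ≠ 0 := by linarith
    have h2 : Real.exp (β * |v|) - 1 ≠ 0 := by
      have : 1 < Real.exp (β * |v|) := by rw [Real.one_lt_exp_iff]; positivity
      linarith
    rw [← div_eq_mul_inv, div_eq_div_iff h2 h1]
    linear_combination (-|v|) * e

lemma aux_fourier {β s : ℝ} (hβ : 0 < β) (hs : s ≠ 0) :
    ∫ v : ℝ, Complex.exp (-(Complex.I * s * v)) * ((|v| / (Real.exp (β * |v|) - 1) : ℝ) : ℂ)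
      = ((2 * Cfun β s : ℝ) : ℂ) := by
  have hpos : ∀ n : ℕ, 0 < β * ((n : ℝ) + 1) := fun n => by positivity
  set F : ℕ → ℝ → ℂ := fun n v => Complex.exp (-(Complex.I * s * v)) *
    ((|v| * Real.exp (-(β * ((n : ℝ) + 1) * |v|)) : ℝ) : ℂ) with hF
  have hnorm : ∀ n v, ‖F n v‖ = |v| * Real.exp (-(β * ((n : ℝ) + 1) * |v|)) := by
    intro n v
    simp only [hF]
    rw [norm_mul, Complex.norm_exp, Complex.norm_real, Real.norm_of_nonneg (by positivity)]
    simp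
  have hint : ∀ n, Integrable (F n) := by
    intro n
    refine (aux_int_abs_exp (hpos n)).mono' (by fun_prop) (ae_of_all _ fun x => ?_)
    rw [hnorm]
  have hval : ∀ n : ℕ, ∫ v, ‖F n v‖ = 2 / β ^ 2 * (1 / ((n : ℝ) + 1) ^ 2) := by
    intro n
    have h := aux_integral_full (hpos n) 0
    simp only [Complex.ofReal_zero, mul_zero, zero_mul, neg_zero, Complex.exp_zero, one_mul,
      add_zero, sub_zero] at h
    rw [integral_complex_ofReal] at h
    simp only [hnorm]
    have h' : ∫ v : ℝ, |v| * Real.exp (-(β * ((n : ℝ) + 1) * |v|))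
        = 1 / (β * ((n : ℝ) + 1)) ^ 2 + 1 / (β * ((n : ℝ) + 1)) ^ 2 := by
      exact_mod_cast h
    rw [h']
    field_simp
    norm_num
  have hsummable : Summable fun n => ∫ v, ‖F n v‖ := by
    simp only [hval]
    refine Summable.mul_left _ ?_
    have := (summable_nat_add_iff 1).2 (Real.summable_one_div_nat_pow.2 (one_lt_two))
    simpa using this
  have h := hasSum_integral_of_summable_integral_norm hint hsummable
  have h2 : ∀ v, ∑' n, F n v
      = Complex.exp (-(Complex.I * s * v)) * ((|v| / (Real.exp (β * |v|) - 1) : ℝ) : ℂ) := by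
    intro v
    exact ((Complex.hasSum_ofReal.2 (aux_planck_sum hβ v)).mul_left _).tsum_eq
  simp only [h2] at h
  refine h.unique ?_
  have h3 := aux_series_scaled hβ hs
  convert! h3 using 2 with n
  exact aux_integral_full (hpos n) s

lemma aux_f_integrable {β : ℝ} (hβ : 0 < β) :
    Integrable (fun v : ℝ => ((|v| / (Real.exp (β * |v|) - 1) : ℝ) : ℂ)) := by
  suffices h : Integrable (fun v : ℝ => |v| / (Real.exp (β * |v|) - 1)) from h.ofReal
  refine ((aux_int_exp_abs (c := β / 2) (by positivity)).const_mul (1 / β)).mono'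
    (Measurable.aestronglyMeasurable (by fun_prop)) (ae_of_all _ fun v => ?_)
  by_cases hv : v = 0
  · subst hv; simp [hβ.le]
  have hv' : 0 < |v| := abs_pos.2 hv
  have h2 : 0 < Real.exp (β * |v|) - 1 := by
    have : 1 < Real.exp (β * |v|) := by rw [Real.one_lt_exp_iff]; positivity
    linarith
  rw [Real.norm_of_nonneg (by positivity), div_le_iff₀ h2]
  have h3 : β / 2 * |v| ≤ Real.sinh (β / 2 * |v|) := Real.self_le_sinh_iff.2 (by positivity)
  rw [Real.sinh_eq] at h3
  have h4 : Real.exp (β * |v|) = Real.exp (β / 2 * |v|) * Real.exp (β / 2 * |v|) := by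
    rw [← Real.exp_add]; congr 1; ring
  have h5 : Real.exp (β / 2 * |v|) * Real.exp (-(β / 2 * |v|)) = 1 := by
    rw [← Real.exp_add]; simp
  have h6 : 1 / β * Real.exp (-(β / 2 * |v|)) * (Real.exp (β * |v|) - 1)
      = 1 / β * (Real.exp (β / 2 * |v|) - Real.exp (-(β / 2 * |v|))) := by
    rw [h4]; linear_combination (1 / β * Real.exp (β / 2 * |v|)) * h5
  rw [h6, one_div, ← div_eq_inv_mul, le_div_iff₀ hβ]
  linarith

lemma aux_Cfun_bounds {β s : ℝ} (hβ : 0 < β) (hs : s ≠ 0) :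
    0 ≤ Cfun β s ∧ Cfun β s ≤ 1 / (2 * s ^ 2) := by
  unfold Cfun
  rw [if_neg hs]
  have h1 : (π * s / β) ^ 2 ≤ Real.sinh (π * s / β) ^ 2 := by
    rw [sq_le_sq, Real.abs_sinh]
    exact Real.self_le_sinh_iff.2 (abs_nonneg _)
  have h2 : 0 < (π * s / β) ^ 2 := by positivity
  constructor
  · rw [sub_nonneg]
    calc (π ^ 2 / (2 * β ^ 2)) / Real.sinh (π * s / β) ^ 2
        ≤ (π ^ 2 / (2 * β ^ 2)) / (π * s / β) ^ 2 := by gcongr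
      _ = _ := by field_simp
  · have : 0 ≤ (π ^ 2 / (2 * β ^ 2)) / Real.sinh (π * s / β) ^ 2 := by positivity
    linarith

lemma aux_ne_ae : ∀ᵐ s : ℝ, s ≠ 0 := by
  simp [ae_iff]

lemma aux_Cfun_integrable {β : ℝ} (hβ : 0 < β) : Integrable (Cfun β) := by
  set M : ℝ := ∫ v : ℝ, ‖((|v| / (Real.exp (β * |v|) - 1) : ℝ) : ℂ)‖ with hM
  refine (integrable_inv_one_add_sq.const_mul ((M + 1) / 2)).mono' ?_ ?_
  · refine Measurable.aestronglyMeasurable ?_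
    unfold Cfun
    exact Measurable.ite (measurableSet_singleton 0) measurable_const (by fun_prop)
  · filter_upwards [aux_ne_ae] with s hs
    obtain ⟨h0, h1⟩ := aux_Cfun_bounds hβ hs
    rw [Real.norm_of_nonneg h0]
    have h2 : 2 * Cfun β s ≤ M := by
      have e : ‖((2 * Cfun β s : ℝ) : ℂ)‖ = 2 * Cfun β s := by
        rw [Complex.norm_real, Real.norm_of_nonneg (by positivity)]
      rw [← e, ← aux_fourier hβ hs]
      refine (norm_integral_le_integral_norm _).trans (le_of_eq ?_)
      rw [hM]
      refine integral_congr_ae (ae_of_all _ fun v => ?_)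
      simp only
      rw [norm_mul, Complex.norm_exp]
      simp
    have h3 : Cfun β s * s ^ 2 ≤ 1 / 2 := by
      have hs2 : 0 < s ^ 2 := by positivity
      calc Cfun β s * s ^ 2 ≤ 1 / (2 * s ^ 2) * s ^ 2 := by gcongr
        _ = 1 / 2 := by field_simp
    rw [← div_eq_mul_inv, le_div_iff₀ (by positivity)]
    linarith

lemma aux_main {β E : ℝ} (hβ : 0 < β) (hE : E ≠ 0) :
    ∫ s : ℝ, Complex.exp (-(Complex.I * E * s)) * ((Cfun β s : ℝ) : ℂ)
      = ((π * (|E| / (Real.exp (β * |E|) - 1)) : ℝ) : ℂ) := by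
  set f : ℝ → ℂ := fun v : ℝ => ((|v| / (Real.exp (β * |v|) - 1) : ℝ) : ℂ) with hf
  have hfi : Integrable f := aux_f_integrable hβ
  have hF : 𝓕 f =ᵐ[volume] fun w : ℝ => ((2 * Cfun β (2 * π * w) : ℝ) : ℂ) := by
    filter_upwards [aux_ne_ae] with w hw
    have hw' : 2 * π * w ≠ 0 := by have := Real.pi_pos; positivity
    rw [Real.fourier_real_eq_integral_exp_smul, ← aux_fourier hβ hw']
    refine integral_congr_ae (ae_of_all _ fun v => ?_)
    simp only [hf, smul_eq_mul]
    congr 2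
    push_cast
    ring
  have hFi : Integrable (𝓕 f) := by
    refine Integrable.congr ?_ hF.symm
    exact (((aux_Cfun_integrable hβ).comp_mul_left' (by positivity : 2 * π ≠ 0)).const_mul 2).ofReal
  have hE' : Real.exp (β * |-E|) - 1 ≠ 0 := by
    have : 1 < Real.exp (β * |-E|) := by
      rw [Real.one_lt_exp_iff]; have := abs_pos.2 (neg_ne_zero.2 hE); positivity
    linarith
  have hcont : ContinuousAt f (-E) := by
    refine Complex.continuous_ofReal.continuousAt.comp ?_
    refine ContinuousAt.div (by fun_prop) (by fun_prop) hE'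
  have hinv := hfi.fourierInv_fourier_eq hFi hcont
  rw [Real.fourierInv_eq'] at hinv
  have h1 : ∫ w : ℝ, Complex.exp (((2 * π * inner ℝ w (-E) : ℝ) : ℂ) * Complex.I) • 𝓕 f w
      = ∫ w : ℝ, (fun s : ℝ => 2 * (Complex.exp (-(Complex.I * E * s)) * ((Cfun β s : ℝ) : ℂ)))
        (2 * π * w) := by
    refine integral_congr_ae ?_
    filter_upwards [hF] with w hw
    rw [hw]
    simp only [smul_eq_mul, inner]
    push_cast
    rw [mul_left_comm]
    congr 3
    simp
    ring
  have h2 := Measure.integral_comp_mul_left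
    (fun s : ℝ => 2 * (Complex.exp (-(Complex.I * E * s)) * ((Cfun β s : ℝ) : ℂ))) (2 * π)
  rw [h1, h2, integral_const_mul] at hinv
  simp only [hf, abs_neg] at hinv
  rw [abs_of_pos (by positivity)] at hinv
  rw [Complex.real_smul] at hinv
  have hpi : (π : ℂ) ≠ 0 := by exact_mod_cast Real.pi_ne_zero
  rw [Complex.ofReal_mul, ← hinv]
  push_cast
  field_simp

lemma aux_exp_integrable {β : ℝ} (hβ : 0 < β) (E : ℝ) :
    Integrable (fun s : ℝ => Complex.exp (-(Complex.I * E * s)) * ((Cfun β s : ℝ) : ℂ)) := by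
  have h := aux_Cfun_integrable hβ
  refine h.norm.mono' ?_ (ae_of_all _ fun s => ?_)
  · exact (Continuous.aestronglyMeasurable (by fun_prop)).mul h.ofReal.aestronglyMeasurable
  · rw [norm_mul, Complex.norm_exp, Complex.norm_real]
    simp

lemma aux_neg_planck {β E : ℝ} (hβ : 0 < β) (hE : E < 0) :
    E / (Real.exp (β * E) - 1) = -E + -E / (Real.exp (β * -E) - 1) := by
  have e : Real.exp (β * E) * Real.exp (β * -E) = 1 := by rw [← Real.exp_add]; simp
  have h1 : Real.exp (β * E) - 1 ≠ 0 := by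
    have : Real.exp (β * E) < 1 := by rw [Real.exp_lt_one_iff]; nlinarith
    linarith
  have h2 : Real.exp (β * -E) - 1 ≠ 0 := by
    have : 1 < Real.exp (β * -E) := by rw [Real.one_lt_exp_iff]; nlinarith
    linarith
  generalize Real.exp (β * E) = a at *
  generalize Real.exp (β * -E) = b at *
  field_simp
  linear_combination (E) * e

lemma aux_first (βL βR E : ℝ) (hL : 0 < βL) (hR : 0 < βR) (hE : E ≠ 0) :
    (∫ s : ℝ, Complex.exp (-(Complex.I * E * s)) *
        (((1 / (4 * π ^ 2)) * (Cfun βL s + Cfun βR s) : ℝ) : ℂ))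
      = (((1 / (4 * π)) * (|E| / (Real.exp (βL * |E|) - 1)
          + |E| / (Real.exp (βR * |E|) - 1)) : ℝ) : ℂ) := by
  have h : ∀ s : ℝ, Complex.exp (-(Complex.I * E * s)) *
        (((1 / (4 * π ^ 2)) * (Cfun βL s + Cfun βR s) : ℝ) : ℂ)
      = ((1 / (4 * π ^ 2) : ℝ) : ℂ) * (Complex.exp (-(Complex.I * E * s)) * ((Cfun βL s : ℝ) : ℂ)
        + Complex.exp (-(Complex.I * E * s)) * ((Cfun βR s : ℝ) : ℂ)) := by
    intro s; push_cast; ring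
  simp only [h]
  rw [integral_const_mul, integral_add (aux_exp_integrable hL E) (aux_exp_integrable hR E),
    aux_main hL hE, aux_main hR hE, ← Complex.ofReal_add, ← Complex.ofReal_mul]
  congr 1
  have := Real.pi_ne_zero
  field_simp

/-- For `β_L, β_R > 0` and `E ≠ 0`,
`∫_ℝ e^{−iEs}·(1/(4π²))·(C_{β_L}(s) + C_{β_R}(s)) ds
  = (1/(4π))·(|E|/(e^{β_L|E|}−1) + |E|/(e^{β_R|E|}−1))`,
and consequently this Fourier transform plus the vacuum rate `−(E/(2π))·Θ(−E)` equals the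
arithmetic mean `(1/2)(𝓡₀^{(β_L)}(E) + 𝓡₀^{(β_R)}(E))` of the two Planckian rates. -/
theorem stmt9 (βL βR E : ℝ) (hL : 0 < βL) (hR : 0 < βR) (hE : E ≠ 0) :
    (∫ s : ℝ, Complex.exp (-(Complex.I * E * s)) *
        (((1 / (4 * π ^ 2)) * (Cfun βL s + Cfun βR s) : ℝ) : ℂ))
      = (((1 / (4 * π)) * (|E| / (Real.exp (βL * |E|) - 1)
          + |E| / (Real.exp (βR * |E|) - 1)) : ℝ) : ℂ) ∧
    (∫ s : ℝ, Complex.exp (-(Complex.I * E * s)) *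
        (((1 / (4 * π ^ 2)) * (Cfun βL s + Cfun βR s) : ℝ) : ℂ))
      + ((-(E / (2 * π)) * (if E < 0 then 1 else 0) : ℝ) : ℂ)
      = (((1 / 2) * (planckRate βL E + planckRate βR E) : ℝ) : ℂ) := by
  have h1 := aux_first βL βR E hL hR hE
  refine ⟨h1, ?_⟩
  rw [h1, ← Complex.ofReal_add]
  congr 1
  have hpi := Real.pi_ne_zero
  unfold planckRate
  rcases lt_or_gt_of_ne hE with h | h
  · rw [if_pos h, aux_neg_planck hL h, aux_neg_planck hR h, abs_of_neg h]
    field_simp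
    ring
  · rw [if_neg h.not_gt, abs_of_pos h]
    field_simp
    ring
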